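/- arXiv:math/0407294 — 2 statements merged into one kernel-verified Lean document; each statement's English description precedes it below -/
import Mathlib

section
/- Let V, P and U be Banach spaces, and let B: V → L(U;P) satisfy Hypothesis (C) with difference kernel C, local bounds M_B(r), M_C(r) and exponent ε∈(0,1]. Let γ,κ∈(0,1) with γ+κε>1, τ∈(0,1], X∈C^γ([0,τ];U), and let Y, Y' ∈ C^κ([0,τ];V) with Y(0)=Y'(0), Hölder constants at most R and sup norms at most R̃. Define the Young integrals Z(t)=∫_0^t B(Y(s))dX(s) and Z'(t)=∫_0^t B(Y'(s))dX(s). Then H_{γ,τ}(Z−Z';P) ≤ K'_τ · H_{κ,τ}(Y−Y';V), where K'_τ = K_{γ+κε} H_{γ,τ}(X;U) ( 3M_C(R̃)(2R)^ε τ^κ + M_B(R̃)τ^{(1−ε)κ} + M_B(R̃)τ^κ ) and K_{γ+κε} is the Young-integral constant depending only on γ+κε; in particular K'_τ → 0 as τ → 0. -/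
/-- **Hypothesis (C)** for a map `B : V → L(U;P)` (`V`, `P`, `U` Banach spaces):
there is a difference kernel `Cc` from `V` to bounded bilinear maps `V × U → P`
with `B(y')x - B(y)x = ∫_0^1 C(y + r(y'-y))(y'-y, x) dr`, local bounds
`M_B(r) = sup_{‖y‖ ≤ r} ‖C(y)‖ < ∞`, and a local `ε`-Hölder estimate for
`y ↦ C(y)` with increasing constants `M_C(r) > 0`, `ε ∈ (0,1]`. -/
def HypCplain {V P U : Type*} [NormedAddCommGroup V] [NormedSpace ℝ V]
    [NormedAddCommGroup P] [NormedSpace ℝ P]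
    [NormedAddCommGroup U] [NormedSpace ℝ U]
    (B : V → (U →L[ℝ] P)) (Cc : V → V →ₗ[ℝ] U →ₗ[ℝ] P)
    (MB MC : ℝ → ℝ) (ε : ℝ) : Prop :=
  (∀ y y' : V, ∀ x : U,
      B y' x - B y x = ∫ r in (0:ℝ)..1, Cc (y + r • (y' - y)) (y' - y) x) ∧
  (∀ r : ℝ, ∀ y : V, ‖y‖ ≤ r → ∀ (z : V) (x : U),
      ‖Cc y z x‖ ≤ MB r * ‖z‖ * ‖x‖) ∧
  Monotone MC ∧ (∀ r : ℝ, 0 < MC r) ∧ 0 < ε ∧ ε ≤ 1 ∧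
  (∀ r : ℝ, ∀ y y' : V, ‖y‖ ≤ r → ‖y'‖ ≤ r → ∀ (z : V) (x : U),
      ‖Cc y' z x - Cc y z x‖ ≤ MC r * ‖y' - y‖ ^ ε * ‖z‖ * ‖x‖)

/-!
The difference `Z - Z'` is the Young integral of `s ↦ B (Y s) - B (Y' s)` against `X`. Comparing
Riemann sums over dyadic partitions gives the Young–Loève estimate, which bounds the `γ`-Hölder
constant of a Young integral by the sup norm and the Hölder constant of its integrand. For the
integrand at hand, the former is controlled by the local bound on the difference kernel. For the
latter, writing both differences as integrals of the kernel over segments, one has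
`C(b' + r(b - b'))(b - b') - C(a' + r(a - a'))(a - a') =
  [C(b' + r(b - b')) - C(a' + r(a - a'))](b - b') + C(a' + r(a - a'))((b - b') - (a - a'))`,
where the first term is handled by the Hölder continuity of the kernel and the second by its local
bound. The factor `τ ^ κ` arises because `Y - Y'` vanishes at `0`.
-/

open Filter Topology Set

section Holder

variable {E : Type*} [NormedAddCommGroup E]

/-- `f` is Hölder continuous on `[a, b]` with exponent `γ` and constant `H`. In contrast to
`HolderOnWith`, the exponent and the constant are real numbers. -/
def HolderOnIcc (f : ℝ → E) (H γ a b : ℝ) : Prop :=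
  ∀ s t : ℝ, a ≤ s → s ≤ t → t ≤ b → ‖f t - f s‖ ≤ H * (t - s) ^ γ

namespace HolderOnIcc

variable {f : ℝ → E} {H γ β a b : ℝ}

theorem mono_interval {a' b' : ℝ} (h : HolderOnIcc f H γ a b) (ha : a ≤ a') (hb : b' ≤ b) :
    HolderOnIcc f H γ a' b' :=
  fun s t hs hst ht => h s t (ha.trans hs) hst (ht.trans hb)

theorem mono_const {H' : ℝ} (h : HolderOnIcc f H γ a b) (hH : H ≤ H') :
    HolderOnIcc f H' γ a b :=
  fun s t hs hst ht => (h s t hs hst ht).trans <|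
    mul_le_mul_of_nonneg_right hH (Real.rpow_nonneg (sub_nonneg.2 hst) _)

theorem const_nonneg (h : HolderOnIcc f H γ a b) (hab : a < b) : 0 ≤ H :=
  nonneg_of_mul_nonneg_left ((norm_nonneg _).trans (h a b le_rfl hab.le le_rfl))
    (Real.rpow_pos_of_pos (sub_pos.2 hab) γ)

theorem norm_le_of_eq_zero (h : HolderOnIcc f H γ a b) (hab : a < b) (hγ : 0 ≤ γ)
    (hfa : f a = 0) {t : ℝ} (ht : t ∈ Icc a b) : ‖f t‖ ≤ H * (b - a) ^ γ := by
  have hH := h.const_nonneg hab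
  calc ‖f t‖ = ‖f t - f a‖ := by rw [hfa, sub_zero]
    _ ≤ H * (t - a) ^ γ := h a t le_rfl ht.1 ht.2
    _ ≤ H * (b - a) ^ γ := by
      have := sub_nonneg.2 ht.1
      have := ht.2
      gcongr

theorem of_exponent_le (h : HolderOnIcc f H γ a b) (hab : a < b) (hβ : 0 ≤ β) (hβγ : β ≤ γ) :
    HolderOnIcc f (H * (b - a) ^ (γ - β)) β a b := by
  intro s t hs hst ht
  have hH := h.const_nonneg hab
  have hts := sub_nonneg.2 hst
  have hγβ := sub_nonneg.2 hβγ
  calc ‖f t - f s‖ ≤ H * (t - s) ^ γ := h s t hs hst ht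
    _ = H * (t - s) ^ (γ - β) * (t - s) ^ β := by
      rw [mul_assoc, ← Real.rpow_add_of_nonneg hts hγβ hβ, sub_add_cancel]
    _ ≤ H * (b - a) ^ (γ - β) * (t - s) ^ β := by gcongr

end HolderOnIcc

end Holder

section Partitions

/-- The partition points of `[a, b]` into `N` intervals of equal length. Only the points with index
`i ≤ N` lie in `[a, b]`, and for `N = 0` division by zero makes all of them equal to `a`. -/
noncomputable def uniformPartition (a b : ℝ) (N i : ℕ) : ℝ :=
  a + i * ((b - a) / N)

variable {a b : ℝ} {N : ℕ}

@[simp]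
theorem uniformPartition_zero : uniformPartition a b N 0 = a := by
  simp [uniformPartition]

theorem uniformPartition_self (hN : N ≠ 0) : uniformPartition a b N N = b := by
  rw [uniformPartition]
  field_simp
  ring

theorem uniformPartition_succ_sub (i : ℕ) :
    uniformPartition a b N (i + 1) - uniformPartition a b N i = (b - a) / N := by
  simp only [uniformPartition]
  push_cast
  ring

theorem uniformPartition_two_mul (i : ℕ) :
    uniformPartition a b (2 * N) (2 * i) = uniformPartition a b N i := by
  simp only [uniformPartition]
  push_cast
  rw [mul_comm 2 (i : ℝ), mul_assoc, mul_div_assoc', mul_div_mul_left _ _ two_ne_zero]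

theorem uniformPartition_monotone (hab : a ≤ b) : Monotone (uniformPartition a b N) := by
  have := sub_nonneg.2 hab
  intro i j hij
  rw [uniformPartition, uniformPartition]
  gcongr

/-- The sequence `σ 0, …, σ (m - 1), ρ 0, ρ 1, …`. If `σ m = ρ 0` and `σ`, `ρ` are partitions of
adjacent intervals, with `m` the number of intervals of `σ`, this is their concatenation. -/
def appendPartition (σ : ℕ → ℝ) (m : ℕ) (ρ : ℕ → ℝ) (i : ℕ) : ℝ :=
  if i < m then σ i else ρ (i - m)

variable {σ ρ : ℕ → ℝ} {m n : ℕ}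

theorem appendPartition_of_le (h : σ m = ρ 0) {i : ℕ} (hi : i ≤ m) :
    appendPartition σ m ρ i = σ i := by
  rcases hi.lt_or_eq with hlt | rfl
  · exact if_pos hlt
  · simp [appendPartition, h]

theorem appendPartition_add (j : ℕ) : appendPartition σ m ρ (m + j) = ρ j := by
  simp [appendPartition]

theorem forall_appendPartition_succ {p : ℝ → ℝ → Prop} (h : σ m = ρ 0)
    (hσ : ∀ i < m, p (σ i) (σ (i + 1))) (hρ : ∀ i < n, p (ρ i) (ρ (i + 1))) :
    ∀ i < m + n, p (appendPartition σ m ρ i) (appendPartition σ m ρ (i + 1)) := by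
  intro i hi
  rcases lt_or_ge i m with him | him
  · rw [appendPartition_of_le h him.le, appendPartition_of_le h him]
    exact hσ i him
  · obtain ⟨j, rfl⟩ := Nat.exists_eq_add_of_le him
    rw [add_assoc, appendPartition_add, appendPartition_add]
    exact hρ j (by omega)

end Partitions

section YoungIntegral

variable {P U : Type*} [NormedAddCommGroup P] [NormedSpace ℝ P]
  [NormedAddCommGroup U] [NormedSpace ℝ U]

/-- The left-point Riemann sum of `F` against `X` over the partition `σ 0, …, σ n`. -/
def riemannSum (F : ℝ → U →L[ℝ] P) (X : ℝ → U) (σ : ℕ → ℝ) (n : ℕ) : P :=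
  ∑ i ∈ Finset.range n, F (σ i) (X (σ (i + 1)) - X (σ i))

/-- `z` is the Young integral `∫_a^b F dX`, the limit of the left-point Riemann sums of `F` against
`X` as the mesh of the partition of `[a, b]` tends to zero. -/
def IsYoungIntegral (F : ℝ → U →L[ℝ] P) (X : ℝ → U) (a b : ℝ) (z : P) : Prop :=
  ∀ e > (0 : ℝ), ∃ d > (0 : ℝ), ∀ (n : ℕ) (σ : ℕ → ℝ),
    σ 0 = a → σ n = b → (∀ i < n, σ i ≤ σ (i + 1)) → (∀ i < n, σ (i + 1) - σ i < d) →
    ‖riemannSum F X σ n - z‖ < e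

/-- The constant of the Young–Loève estimate for total regularity `θ > 1`: the sum of the geometric
series of ratio `2 ^ (1 - θ)`. -/
noncomputable def youngConst (θ : ℝ) : ℝ :=
  (1 - (2 : ℝ) ^ (1 - θ))⁻¹

theorem two_rpow_one_sub_lt_one {θ : ℝ} (hθ : 1 < θ) : (2 : ℝ) ^ (1 - θ) < 1 :=
  Real.rpow_lt_one_of_one_lt_of_neg one_lt_two (sub_neg.2 hθ)

theorem one_le_youngConst {θ : ℝ} (hθ : 1 < θ) : 1 ≤ youngConst θ :=
  (one_le_inv₀ (sub_pos.2 (two_rpow_one_sub_lt_one hθ))).2 (sub_le_self _ (by positivity))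

variable {F F' : ℝ → U →L[ℝ] P} {X : ℝ → U} {a b c : ℝ} {z z' w : P}

theorem riemannSum_sub (σ : ℕ → ℝ) (n : ℕ) :
    riemannSum (fun s => F s - F' s) X σ n = riemannSum F X σ n - riemannSum F' X σ n := by
  simp only [riemannSum, sub_apply, Finset.sum_sub_distrib]

theorem riemannSum_appendPartition {σ ρ : ℕ → ℝ} {m : ℕ} (h : σ m = ρ 0) (n : ℕ) :
    riemannSum F X (appendPartition σ m ρ) (m + n) = riemannSum F X σ m + riemannSum F X ρ n := by
  simp only [riemannSum]
  rw [Finset.sum_range_add]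
  congr 1
  · refine Finset.sum_congr rfl fun i hi => ?_
    have hi := Finset.mem_range.1 hi
    rw [appendPartition_of_le h hi.le, appendPartition_of_le h hi]
  · simp only [add_assoc, appendPartition_add]

theorem riemannSum_two_mul_sub (σ : ℕ → ℝ) (n : ℕ) :
    riemannSum F X σ (2 * n) - riemannSum F X (fun i => σ (2 * i)) n =
      ∑ i ∈ Finset.range n, (F (σ (2 * i + 1)) - F (σ (2 * i)))
        (X (σ (2 * i + 2)) - X (σ (2 * i + 1))) := by
  induction n with
  | zero => simp [riemannSum]
  | succ n ih =>
    rw [Finset.sum_range_succ, ← ih]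
    simp only [riemannSum, mul_add_one, Finset.sum_range_succ, sub_apply, map_sub]
    abel

namespace IsYoungIntegral

theorem sub (h : IsYoungIntegral F X a b z) (h' : IsYoungIntegral F' X a b z') :
    IsYoungIntegral (fun s => F s - F' s) X a b (z - z') := by
  intro e he
  obtain ⟨d, hd, H⟩ := h (e / 2) (half_pos he)
  obtain ⟨d', hd', H'⟩ := h' (e / 2) (half_pos he)
  refine ⟨min d d', lt_min hd hd', fun n σ ha hb hmono hmesh => ?_⟩
  have hz := H n σ ha hb hmono fun i hi => (hmesh i hi).trans_le (min_le_left _ _)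
  have hz' := H' n σ ha hb hmono fun i hi => (hmesh i hi).trans_le (min_le_right _ _)
  rw [riemannSum_sub, sub_sub_sub_comm]
  linarith [norm_sub_le (riemannSum F X σ n - z) (riemannSum F' X σ n - z')]

theorem tendsto_riemannSum_uniformPartition (h : IsYoungIntegral F X a b z) (hab : a ≤ b) :
    Tendsto (fun N => riemannSum F X (uniformPartition a b N) N) atTop (𝓝 z) := by
  rw [Metric.tendsto_nhds]
  intro e he
  obtain ⟨d, hd, H⟩ := h e he
  filter_upwards [(tendsto_const_div_atTop_nhds_zero_nat (b - a)).eventually_lt_const hd,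
    eventually_ne_atTop 0] with N hmesh hN
  rw [dist_eq_norm]
  exact H N _ uniformPartition_zero (uniformPartition_self hN)
    (fun i _ => uniformPartition_monotone hab i.le_succ)
    fun i _ => (uniformPartition_succ_sub i).trans_lt hmesh

theorem unique (h : IsYoungIntegral F X a b z) (h' : IsYoungIntegral F X a b z') (hab : a ≤ b) :
    z = z' :=
  tendsto_nhds_unique (h.tendsto_riemannSum_uniformPartition hab)
    (h'.tendsto_riemannSum_uniformPartition hab)

theorem interval_sub_left (hab : a ≤ b) (hz : IsYoungIntegral F X a b z)
    (hw : IsYoungIntegral F X a c w) :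
    IsYoungIntegral F X b c (w - z) := by
  intro e he
  obtain ⟨d, hd, H⟩ := hw (e / 2) (half_pos he)
  refine ⟨d, hd, fun n ρ hb hc hmono hmesh => ?_⟩
  obtain ⟨N, hNz, hNmesh, hN⟩ :=
    (((Metric.tendsto_nhds.1 (hz.tendsto_riemannSum_uniformPartition hab) _ (half_pos he)).and <|
      ((tendsto_const_div_atTop_nhds_zero_nat (b - a)).eventually_lt_const hd).and <|
      eventually_ne_atTop 0)).exists
  rw [dist_eq_norm] at hNz
  set σ := uniformPartition a b N
  have hjoin : σ N = ρ 0 := (uniformPartition_self hN).trans hb.symm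
  have hNw := H (N + n) (appendPartition σ N ρ)
    ((appendPartition_of_le hjoin N.zero_le).trans uniformPartition_zero)
    ((appendPartition_add n).trans hc)
    (forall_appendPartition_succ hjoin
      (fun i _ => uniformPartition_monotone hab i.le_succ) hmono)
    (forall_appendPartition_succ (p := fun x y => y - x < d) hjoin
      (fun i _ => (uniformPartition_succ_sub i).trans_lt hNmesh) hmesh)
  rw [riemannSum_appendPartition hjoin] at hNw
  calc ‖riemannSum F X ρ n - (w - z)‖
      = ‖(riemannSum F X σ N + riemannSum F X ρ n - w) - (riemannSum F X σ N - z)‖ := by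
        congr 1
        abel
    _ ≤ ‖riemannSum F X σ N + riemannSum F X ρ n - w‖ + ‖riemannSum F X σ N - z‖ :=
        norm_sub_le _ _
    _ < e := by linarith

end IsYoungIntegral

variable {L HX β γ : ℝ}

theorem norm_riemannSum_uniformPartition_two_mul_sub_le (hF : HolderOnIcc F L β a b)
    (hX : HolderOnIcc X HX γ a b) (hab : a < b) {N : ℕ} (hN : N ≠ 0) :
    ‖riemannSum F X (uniformPartition a b (2 * N)) (2 * N) -
        riemannSum F X (uniformPartition a b N) N‖ ≤
      N * (L * HX * ((b - a) / (2 * N)) ^ (γ + β)) := by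
  set σ := uniformPartition a b (2 * N) with hσ
  set h : ℝ := (b - a) / (2 * N) with hh
  have hpos : 0 < h := div_pos (sub_pos.2 hab) (by positivity)
  have hmono : Monotone σ := uniformPartition_monotone hab.le
  have hstep (i : ℕ) : σ (i + 1) - σ i = h := by
    simpa [hσ, hh] using uniformPartition_succ_sub (a := a) (b := b) (N := 2 * N) i
  have hterm : ∀ i ∈ Finset.range N, ‖(F (σ (2 * i + 1)) - F (σ (2 * i)))
      (X (σ (2 * i + 2)) - X (σ (2 * i + 1)))‖ ≤ L * HX * h ^ (γ + β) := by
    intro i hi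
    have ha : a ≤ σ (2 * i) := uniformPartition_zero.symm.trans_le (hmono (Nat.zero_le _))
    have hb : σ (2 * i + 2) ≤ b := by
      have : 2 * i + 2 ≤ 2 * N := by have := Finset.mem_range.1 hi; omega
      exact (hmono this).trans_eq (uniformPartition_self (by omega))
    have hleft : σ (2 * i) ≤ σ (2 * i + 1) := hmono (Nat.le_succ _)
    have hright : σ (2 * i + 1) ≤ σ (2 * i + 2) := hmono (Nat.le_succ _)
    have hFi := hF _ _ ha hleft (hright.trans hb)
    have hXi := hX _ _ (ha.trans hleft) hright hb
    rw [hstep] at hFi hXi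
    calc _ ≤ ‖F (σ (2 * i + 1)) - F (σ (2 * i))‖ * ‖X (σ (2 * i + 2)) - X (σ (2 * i + 1))‖ :=
          ContinuousLinearMap.le_opNorm _ _
      _ ≤ (L * h ^ β) * (HX * h ^ γ) :=
          mul_le_mul hFi hXi (norm_nonneg _) ((norm_nonneg _).trans hFi)
      _ = L * HX * h ^ (γ + β) := by
          rw [Real.rpow_add hpos]
          ring
  have hcoarse : uniformPartition a b N = fun i => σ (2 * i) :=
    funext fun i => (uniformPartition_two_mul i).symm
  rw [hcoarse, riemannSum_two_mul_sub]
  simpa using norm_sum_le_of_le _ hterm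

/-- **Young–Loève estimate**. -/
protected theorem IsYoungIntegral.norm_sub_le (hz : IsYoungIntegral F X a b z)
    (hF : HolderOnIcc F L β a b) (hX : HolderOnIcc X HX γ a b) (hθ : 1 < γ + β) (hab : a < b) :
    ‖z - F a (X b - X a)‖ ≤ youngConst (γ + β) * (L * HX * (b - a) ^ (γ + β)) := by
  set S : ℕ → P := fun k => riemannSum F X (uniformPartition a b (2 ^ k)) (2 ^ k) with hS
  have hL := hF.const_nonneg hab
  have hHX := hX.const_nonneg hab
  have hba := sub_pos.2 hab
  have hS0 : S 0 = F a (X b - X a) := by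
    simp [hS, riemannSum, uniformPartition]
  have hlim : Tendsto S atTop (𝓝 z) :=
    (hz.tendsto_riemannSum_uniformPartition hab.le).comp
      (tendsto_pow_atTop_atTop_of_one_lt one_lt_two)
  have hgeom (k : ℕ) :
      dist (S k) (S (k + 1)) ≤ L * HX * (b - a) ^ (γ + β) * ((2 : ℝ) ^ (1 - (γ + β))) ^ k := by
    have hpow : (2 : ℝ) ^ k * (((2 : ℝ) ^ k) ^ (γ + β))⁻¹ = ((2 : ℝ) ^ (1 - (γ + β))) ^ k := by
      rw [← Real.rpow_natCast, ← Real.rpow_mul two_pos.le, ← Real.rpow_natCast,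
        ← Real.rpow_mul two_pos.le, ← Real.rpow_neg two_pos.le, ← Real.rpow_add two_pos]
      ring_nf
    rw [dist_comm, dist_eq_norm, hS]
    simp only [pow_succ' 2 k]
    calc _ ≤ ((2 ^ k : ℕ) : ℝ) * (L * HX * ((b - a) / (2 * (2 ^ k : ℕ))) ^ (γ + β)) :=
          norm_riemannSum_uniformPartition_two_mul_sub_le hF hX hab (by positivity)
      _ ≤ 2 ^ k * (L * HX * ((b - a) / 2 ^ k) ^ (γ + β)) := by
          push_cast
          gcongr
          linarith [pow_pos (two_pos (α := ℝ)) k]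
      _ = L * HX * (b - a) ^ (γ + β) * ((2 : ℝ) ^ (1 - (γ + β))) ^ k := by
          rw [Real.div_rpow hba.le (by positivity), ← hpow]
          ring
  have hdist := dist_le_of_le_geometric_of_tendsto₀ _ _ (two_rpow_one_sub_lt_one hθ) hgeom hlim
  rwa [dist_comm, dist_eq_norm, hS0, div_eq_inv_mul] at hdist

theorem HolderOnIcc.of_isYoungIntegral {Z : ℝ → P} {A : ℝ}
    (hZ : ∀ t ∈ Icc a b, IsYoungIntegral F X a t (Z t)) (hA : ∀ s ∈ Icc a b, ‖F s‖ ≤ A)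
    (hF : HolderOnIcc F L β a b) (hX : HolderOnIcc X HX γ a b)
    (hβ : 0 ≤ β) (hθ : 1 < γ + β) (hab : a < b) :
    HolderOnIcc Z (HX * (A + youngConst (γ + β) * (L * (b - a) ^ β))) γ a b := by
  intro s t hs hst ht
  have hL := hF.const_nonneg hab
  have hHX := hX.const_nonneg hab
  have hA0 : 0 ≤ A := (norm_nonneg _).trans (hA a (left_mem_Icc.2 hab.le))
  have hK : 0 ≤ youngConst (γ + β) := zero_le_one.trans (one_le_youngConst hθ)
  have : 0 < b - a := sub_pos.2 hab
  rcases hst.eq_or_lt with rfl | hlt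
  · rw [sub_self, norm_zero]
    positivity
  have hpos := sub_pos.2 hlt
  have hsb := hst.trans ht
  have hincr : IsYoungIntegral F X s t (Z t - Z s) :=
    (hZ s ⟨hs, hsb⟩).interval_sub_left hs (hZ t ⟨hs.trans hst, ht⟩)
  have hyoung := hincr.norm_sub_le (hF.mono_interval hs ht) (hX.mono_interval hs ht) hθ hlt
  have hgerm : ‖F s (X t - X s)‖ ≤ A * (HX * (t - s) ^ γ) :=
    (F s).le_of_opNorm_le_of_le (hA s ⟨hs, hsb⟩) (hX s t hs hst ht)
  calc ‖Z t - Z s‖ ≤ ‖F s (X t - X s)‖ + ‖Z t - Z s - F s (X t - X s)‖ := norm_le_insert' _ _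
    _ ≤ A * (HX * (t - s) ^ γ) +
        youngConst (γ + β) * (L * HX * (t - s) ^ (γ + β)) := add_le_add hgerm hyoung
    _ = HX * (A + youngConst (γ + β) * (L * (t - s) ^ β)) * (t - s) ^ γ := by
      rw [Real.rpow_add hpos]
      ring
    _ ≤ HX * (A + youngConst (γ + β) * (L * (b - a) ^ β)) * (t - s) ^ γ := by gcongr

end YoungIntegral

theorem norm_add_smul_sub_le {E : Type*} [NormedAddCommGroup E] [NormedSpace ℝ E] {x y : E}
    {ρ r : ℝ} (hx : ‖x‖ ≤ ρ) (hy : ‖y‖ ≤ ρ) (hr : r ∈ Icc (0 : ℝ) 1) :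
    ‖x + r • (y - x)‖ ≤ ρ := by
  simpa using (convex_closedBall (0 : E) ρ).add_smul_sub_mem (by simpa using hx)
    (by simpa using hy) hr

theorem norm_intervalIntegral_zero_one_le {E : Type*} [NormedAddCommGroup E] [NormedSpace ℝ E]
    {f : ℝ → E} {M : ℝ} (h : ∀ r ∈ Icc (0 : ℝ) 1, ‖f r‖ ≤ M) : ‖∫ r in (0 : ℝ)..1, f r‖ ≤ M := by
  have hM : ∀ r ∈ uIoc (0 : ℝ) 1, ‖f r‖ ≤ M := by
    rw [uIoc_of_le zero_le_one]
    exact fun r hr => h r (Ioc_subset_Icc_self hr)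
  simpa using intervalIntegral.norm_integral_le_of_norm_le_const hM

namespace HypCplain

variable {V P U : Type*} [NormedAddCommGroup V] [NormedSpace ℝ V]
  [NormedAddCommGroup P] [NormedSpace ℝ P] [NormedAddCommGroup U] [NormedSpace ℝ U]
  {B : V → (U →L[ℝ] P)} {Cc : V → V →ₗ[ℝ] U →ₗ[ℝ] P} {MB MC : ℝ → ℝ} {ε ρ : ℝ}

theorem sub_apply_eq_integral (h : HypCplain B Cc MB MC ε) (y y' : V) (x : U) :
    B y' x - B y x = ∫ r in (0 : ℝ)..1, Cc (y + r • (y' - y)) (y' - y) x :=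
  h.1 y y' x

theorem norm_kernel_le (h : HypCplain B Cc MB MC ε) {y : V} (hy : ‖y‖ ≤ ρ) (z : V) (x : U) :
    ‖Cc y z x‖ ≤ MB ρ * ‖z‖ * ‖x‖ :=
  h.2.1 ρ y hy z x

theorem kernelHolderConst_pos (h : HypCplain B Cc MB MC ε) : 0 < MC ρ :=
  h.2.2.2.1 ρ

theorem exponent_pos (h : HypCplain B Cc MB MC ε) : 0 < ε :=
  h.2.2.2.2.1

theorem exponent_le_one (h : HypCplain B Cc MB MC ε) : ε ≤ 1 :=
  h.2.2.2.2.2.1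

theorem norm_kernel_sub_le (h : HypCplain B Cc MB MC ε) {y y' : V} (hy : ‖y‖ ≤ ρ)
    (hy' : ‖y'‖ ≤ ρ) (z : V) (x : U) :
    ‖Cc y' z x - Cc y z x‖ ≤ MC ρ * ‖y' - y‖ ^ ε * ‖z‖ * ‖x‖ :=
  h.2.2.2.2.2.2 ρ y y' hy hy' z x

theorem kernelBound_nonneg [Nontrivial V] [Nontrivial U] (h : HypCplain B Cc MB MC ε)
    (hρ : 0 ≤ ρ) : 0 ≤ MB ρ := by
  obtain ⟨z, hz⟩ := exists_ne (0 : V)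
  obtain ⟨x, hx⟩ := exists_ne (0 : U)
  have hbound := (norm_nonneg _).trans (h.norm_kernel_le (y := 0) (by simpa using hρ) z x)
  rw [mul_assoc] at hbound
  exact nonneg_of_mul_nonneg_left hbound (mul_pos (norm_pos_iff.2 hz) (norm_pos_iff.2 hx))

theorem continuousOn_kernel (h : HypCplain B Cc MB MC ε) (z : V) (x : U) :
    ContinuousOn (fun y => Cc y z x) (Metric.closedBall 0 ρ) := by
  intro y hy
  have hlim : Tendsto (fun y' => MC ρ * ‖y' - y‖ ^ ε * ‖z‖ * ‖x‖) (𝓝 y) (𝓝 0) := by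
    have hcont : Continuous fun y' => MC ρ * ‖y' - y‖ ^ ε * ‖z‖ * ‖x‖ := by
      have : Continuous fun y' => ‖y' - y‖ ^ ε :=
        Continuous.rpow_const (by fun_prop) fun _ => Or.inr h.exponent_pos.le
      fun_prop
    simpa [Real.zero_rpow h.exponent_pos.ne'] using hcont.tendsto y
  rw [ContinuousWithinAt, tendsto_iff_norm_sub_tendsto_zero]
  refine squeeze_zero' (Eventually.of_forall fun _ => norm_nonneg _) ?_
    (hlim.mono_left nhdsWithin_le_nhds)
  filter_upwards [self_mem_nhdsWithin] with y' hy'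
  exact h.norm_kernel_sub_le (by simpa using hy) (by simpa using hy') z x

theorem intervalIntegrable_kernel (h : HypCplain B Cc MB MC ε) (y y' z : V) (x : U) :
    IntervalIntegrable (fun r : ℝ => Cc (y + r • (y' - y)) z x) MeasureTheory.volume 0 1 := by
  refine ContinuousOn.intervalIntegrable ?_
  rw [uIcc_of_le zero_le_one]
  refine (h.continuousOn_kernel (ρ := max ‖y‖ ‖y'‖) z x).comp (by fun_prop) fun r hr => ?_
  simpa using norm_add_smul_sub_le (le_max_left ‖y‖ ‖y'‖) (le_max_right ‖y‖ ‖y'‖) hr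

protected theorem norm_sub_le (h : HypCplain B Cc MB MC ε) (hMB : 0 ≤ MB ρ) {y y' : V}
    (hy : ‖y‖ ≤ ρ) (hy' : ‖y'‖ ≤ ρ) : ‖B y' - B y‖ ≤ MB ρ * ‖y' - y‖ := by
  refine ContinuousLinearMap.opNorm_le_bound _ (by positivity) fun x => ?_
  rw [sub_apply, h.sub_apply_eq_integral]
  exact norm_intervalIntegral_zero_one_le fun r hr =>
    h.norm_kernel_le (norm_add_smul_sub_le hy hy' hr) _ _

theorem norm_kernel_sub_kernel_le (h : HypCplain B Cc MB MC ε) {y₁ y₂ : V} (hy₁ : ‖y₁‖ ≤ ρ)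
    (hy₂ : ‖y₂‖ ≤ ρ) (z₁ z₂ : V) (x : U) :
    ‖Cc y₂ z₂ x - Cc y₁ z₁ x‖ ≤
      (MC ρ * ‖y₂ - y₁‖ ^ ε * ‖z₂‖ + MB ρ * ‖z₂ - z₁‖) * ‖x‖ :=
  calc ‖Cc y₂ z₂ x - Cc y₁ z₁ x‖
      = ‖(Cc y₂ z₂ x - Cc y₁ z₂ x) + Cc y₁ (z₂ - z₁) x‖ := by
        rw [map_sub, LinearMap.sub_apply, sub_add_sub_cancel]
    _ ≤ MC ρ * ‖y₂ - y₁‖ ^ ε * ‖z₂‖ * ‖x‖ + MB ρ * ‖z₂ - z₁‖ * ‖x‖ :=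
        norm_add_le_of_le (h.norm_kernel_sub_le hy₁ hy₂ _ _) (h.norm_kernel_le hy₁ _ _)
    _ = (MC ρ * ‖y₂ - y₁‖ ^ ε * ‖z₂‖ + MB ρ * ‖z₂ - z₁‖) * ‖x‖ := by ring

theorem norm_sub_sub_sub_le (h : HypCplain B Cc MB MC ε) (hMB : 0 ≤ MB ρ) {a a' b b' : V} {δ : ℝ}
    (ha : ‖a‖ ≤ ρ) (ha' : ‖a'‖ ≤ ρ) (hb : ‖b‖ ≤ ρ) (hb' : ‖b'‖ ≤ ρ)
    (hab : ‖b - a‖ ≤ δ) (hab' : ‖b' - a'‖ ≤ δ) :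
    ‖(B b - B b') - (B a - B a')‖ ≤
      MC ρ * δ ^ ε * ‖b - b'‖ + MB ρ * ‖(b - b') - (a - a')‖ := by
  have hMC : 0 ≤ MC ρ := h.kernelHolderConst_pos.le
  have hδ : 0 ≤ δ := (norm_nonneg _).trans hab
  refine ContinuousLinearMap.opNorm_le_bound _ (by positivity) fun x => ?_
  simp only [sub_apply]
  rw [h.sub_apply_eq_integral b' b, h.sub_apply_eq_integral a' a, ← intervalIntegral.integral_sub
    (h.intervalIntegrable_kernel _ _ _ _) (h.intervalIntegrable_kernel _ _ _ _)]
  refine norm_intervalIntegral_zero_one_le fun r hr => ?_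
  have hdist : ‖(b' + r • (b - b')) - (a' + r • (a - a'))‖ ≤ δ :=
    calc _ = ‖(b' - a') + r • ((b - a) - (b' - a'))‖ := by
          congr 1
          module
      _ ≤ δ := norm_add_smul_sub_le hab' hab hr
  refine (h.norm_kernel_sub_kernel_le (norm_add_smul_sub_le ha' ha hr)
    (norm_add_smul_sub_le hb' hb hr) _ _ x).trans ?_
  have := h.exponent_pos
  gcongr

variable {Y Y' : ℝ → V} {R HΔ κ a b : ℝ}

theorem norm_comp_sub_comp_le (h : HypCplain B Cc MB MC ε) (hMB : 0 ≤ MB ρ)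
    (hYρ : ∀ s ∈ Icc a b, ‖Y s‖ ≤ ρ) (hYρ' : ∀ s ∈ Icc a b, ‖Y' s‖ ≤ ρ) (h0 : Y a = Y' a)
    (hΔ : HolderOnIcc (fun s => Y s - Y' s) HΔ κ a b) (hκ : 0 ≤ κ) (hab : a < b) :
    ∀ s ∈ Icc a b, ‖B (Y s) - B (Y' s)‖ ≤ MB ρ * (HΔ * (b - a) ^ κ) :=
  fun s hs => (h.norm_sub_le hMB (hYρ' s hs) (hYρ s hs)).trans <|
    mul_le_mul_of_nonneg_left (hΔ.norm_le_of_eq_zero hab hκ (sub_eq_zero.2 h0) hs) hMB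

theorem holderOnIcc_comp_sub_comp (h : HypCplain B Cc MB MC ε) (hMB : 0 ≤ MB ρ)
    (hY : HolderOnIcc Y R κ a b) (hY' : HolderOnIcc Y' R κ a b)
    (hYρ : ∀ s ∈ Icc a b, ‖Y s‖ ≤ ρ) (hYρ' : ∀ s ∈ Icc a b, ‖Y' s‖ ≤ ρ) (h0 : Y a = Y' a)
    (hΔ : HolderOnIcc (fun s => Y s - Y' s) HΔ κ a b) (hκ : 0 ≤ κ) (hab : a < b) :
    HolderOnIcc (fun s => B (Y s) - B (Y' s))
      ((MC ρ * R ^ ε * (b - a) ^ κ + MB ρ * (b - a) ^ (κ - κ * ε)) * HΔ) (κ * ε) a b := by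
  intro s t hs hst ht
  have hsm : s ∈ Icc a b := ⟨hs, hst.trans ht⟩
  have htm : t ∈ Icc a b := ⟨hs.trans hst, ht⟩
  have hts := sub_nonneg.2 hst
  have hMC : 0 ≤ MC ρ := h.kernelHolderConst_pos.le
  have hR := hY.const_nonneg hab
  have hsup := hΔ.norm_le_of_eq_zero hab hκ (sub_eq_zero.2 h0) htm
  have hincr := hΔ.of_exponent_le hab (mul_nonneg hκ h.exponent_pos.le)
    (mul_le_of_le_one_right hκ h.exponent_le_one) s t hs hst ht
  calc _ ≤ MC ρ * (R * (t - s) ^ κ) ^ ε * ‖Y t - Y' t‖ + MB ρ * ‖(Y t - Y' t) - (Y s - Y' s)‖ :=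
        h.norm_sub_sub_sub_le hMB (hYρ s hsm) (hYρ' s hsm) (hYρ t htm) (hYρ' t htm)
          (hY s t hs hst ht) (hY' s t hs hst ht)
    _ ≤ MC ρ * (R * (t - s) ^ κ) ^ ε * (HΔ * (b - a) ^ κ) +
          MB ρ * (HΔ * (b - a) ^ (κ - κ * ε) * (t - s) ^ (κ * ε)) := by gcongr
    _ = (MC ρ * R ^ ε * (b - a) ^ κ + MB ρ * (b - a) ^ (κ - κ * ε)) * HΔ *
          (t - s) ^ (κ * ε) := by
        rw [Real.mul_rpow hR (by positivity), ← Real.rpow_mul hts]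
        ring

theorem holderOnIcc_youngIntegral_sub {γ HX : ℝ} {X : ℝ → U} {Z Z' : ℝ → P}
    (h : HypCplain B Cc MB MC ε) (hMB : 0 ≤ MB ρ) (hX : HolderOnIcc X HX γ a b)
    (h0 : Y a = Y' a) (hY : HolderOnIcc Y R κ a b) (hY' : HolderOnIcc Y' R κ a b)
    (hYρ : ∀ s ∈ Icc a b, ‖Y s‖ ≤ ρ) (hYρ' : ∀ s ∈ Icc a b, ‖Y' s‖ ≤ ρ)
    (hΔ : HolderOnIcc (fun s => Y s - Y' s) HΔ κ a b)
    (hZ : ∀ t ∈ Icc a b, IsYoungIntegral (fun s => B (Y s)) X a t (Z t))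
    (hZ' : ∀ t ∈ Icc a b, IsYoungIntegral (fun s => B (Y' s)) X a t (Z' t))
    (hκ : 0 ≤ κ) (hθ : 1 < γ + κ * ε) (hab : a < b) :
    HolderOnIcc (fun t => Z t - Z' t)
      (HX * (MB ρ + youngConst (γ + κ * ε) * (MC ρ * R ^ ε * (b - a) ^ (κ * ε) + MB ρ)) *
        (b - a) ^ κ * HΔ) γ a b := by
  have hyoung := HolderOnIcc.of_isYoungIntegral (fun t ht => (hZ t ht).sub (hZ' t ht))
    (h.norm_comp_sub_comp_le hMB hYρ hYρ' h0 hΔ hκ hab)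
    (h.holderOnIcc_comp_sub_comp hMB hY hY' hYρ hYρ' h0 hΔ hκ hab) hX
    (mul_nonneg hκ h.exponent_pos.le) hθ hab
  have hpow : (b - a) ^ (κ - κ * ε) * (b - a) ^ (κ * ε) = (b - a) ^ κ := by
    rw [← Real.rpow_add (sub_pos.2 hab), sub_add_cancel]
  refine hyoung.mono_const (le_of_eq ?_)
  linear_combination HX * youngConst (γ + κ * ε) * MB ρ * HΔ * hpow

end HypCplain

theorem youngIntegral_eqOn_of_subsingleton {V P U : Type*}
    [NormedAddCommGroup P] [NormedSpace ℝ P] [NormedAddCommGroup U] [NormedSpace ℝ U]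
    (hVU : Subsingleton V ∨ Subsingleton U) {B : V → (U →L[ℝ] P)} {X : ℝ → U} {Y Y' : ℝ → V}
    {Z Z' : ℝ → P} {a b : ℝ} (hZ : ∀ t ∈ Icc a b, IsYoungIntegral (fun s => B (Y s)) X a t (Z t))
    (hZ' : ∀ t ∈ Icc a b, IsYoungIntegral (fun s => B (Y' s)) X a t (Z' t)) :
    EqOn Z Z' (Icc a b) := by
  have hB : (fun s => B (Y s)) = fun s => B (Y' s) := by
    rcases hVU with hV | hU
    · rw [Subsingleton.elim Y Y']
    · exact Subsingleton.elim _ _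
  rw [← hB] at hZ'
  exact fun t ht => (hZ t ht).unique (hZ' t ht) ht.1

theorem contraction_const_le {A C R τ κ ε K : ℝ} (hA : 0 ≤ A) (hC : 0 ≤ C) (hR : 0 ≤ R)
    (hτ0 : 0 < τ) (hτ1 : τ ≤ 1) (hκ : 0 ≤ κ) (hε : 0 ≤ ε) (hK : 1 ≤ K) :
    (A + K * (C * R ^ ε * τ ^ (κ * ε) + A)) * τ ^ κ ≤
      K * (3 * C * (2 * R) ^ ε * τ ^ κ + A * τ ^ ((1 - ε) * κ) + A * τ ^ κ) := by
  have hsmall : τ ^ (κ * ε) ≤ 1 := Real.rpow_le_one hτ0.le hτ1 (by positivity)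
  have hpow : τ ^ κ ≤ τ ^ ((1 - ε) * κ) :=
    Real.rpow_le_rpow_of_exponent_ge hτ0 hτ1 (by nlinarith)
  have hR2 : R ^ ε ≤ (2 * R) ^ ε := by gcongr; linarith
  calc (A + K * (C * R ^ ε * τ ^ (κ * ε) + A)) * τ ^ κ
      ≤ (K * A + K * (C * (2 * R) ^ ε * 1 + A)) * τ ^ κ := by
        gcongr
        exact le_mul_of_one_le_left hA hK
    _ = K * (1 * C * (2 * R) ^ ε * τ ^ κ + A * τ ^ κ + A * τ ^ κ) := by ring
    _ ≤ K * (3 * C * (2 * R) ^ ε * τ ^ κ + A * τ ^ ((1 - ε) * κ) + A * τ ^ κ) := by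
        gcongr
        norm_num

theorem contraction_estimate_general
    {V P U : Type*} [NormedAddCommGroup V] [NormedSpace ℝ V]
    [NormedAddCommGroup P] [NormedSpace ℝ P] [CompleteSpace P]
    [NormedAddCommGroup U] [NormedSpace ℝ U]
    {γ κ ε : ℝ} (hκ : 0 ≤ κ) (hγκε : 1 < γ + κ * ε) :
    ∃ K : ℝ, ∀ (B : V → (U →L[ℝ] P)) (Cc : V → V →ₗ[ℝ] U →ₗ[ℝ] P) (MB MC : ℝ → ℝ),
      HypCplain B Cc MB MC ε →
      ∀ (τ R Rt HX HΔ : ℝ), 0 < τ → τ ≤ 1 →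
      ∀ (X : ℝ → U) (Y Y' : ℝ → V) (Z Z' : ℝ → P),
        HolderOnIcc X HX γ 0 τ → Y 0 = Y' 0 →
        HolderOnIcc Y R κ 0 τ → HolderOnIcc Y' R κ 0 τ →
        (∀ s ∈ Icc 0 τ, ‖Y s‖ ≤ Rt) → (∀ s ∈ Icc 0 τ, ‖Y' s‖ ≤ Rt) →
        HolderOnIcc (fun s => Y s - Y' s) HΔ κ 0 τ →
        (∀ t ∈ Icc 0 τ, IsYoungIntegral (fun s => B (Y s)) X 0 t (Z t)) →
        (∀ t ∈ Icc 0 τ, IsYoungIntegral (fun s => B (Y' s)) X 0 t (Z' t)) →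
        HolderOnIcc (fun t => Z t - Z' t)
          (K * HX * (3 * MC Rt * (2 * R) ^ ε * τ ^ κ + MB Rt * τ ^ ((1 - ε) * κ) +
            MB Rt * τ ^ κ) * HΔ) γ 0 τ := by
  by_cases hVU : Subsingleton V ∨ Subsingleton U
  · -- `MB` may be negative here, so only `K = 0` works.
    refine ⟨0, fun B _ _ _ _ τ _ _ _ _ _ _ X Y Y' Z Z' _ _ _ _ _ _ _ hZ hZ' s t hs hst ht => ?_⟩
    have hZZ' := youngIntegral_eqOn_of_subsingleton hVU hZ hZ'
    simp [hZZ' ⟨hs, hst.trans ht⟩, hZZ' ⟨hs.trans hst, ht⟩]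
  · simp only [not_or, not_subsingleton_iff_nontrivial] at hVU
    obtain ⟨_, _⟩ := hVU
    refine ⟨youngConst (γ + κ * ε), fun B Cc MB MC hC τ R Rt HX HΔ hτ0 hτ1 X Y Y' Z Z'
      hX h0 hY hY' hYb hYb' hΔ hZ hZ' => ?_⟩
    have hMB : 0 ≤ MB Rt :=
      hC.kernelBound_nonneg ((norm_nonneg _).trans (hYb 0 (left_mem_Icc.2 hτ0.le)))
    have hconst := contraction_const_le hMB (hC.kernelHolderConst_pos (ρ := Rt)).le
      (hY.const_nonneg hτ0) hτ0 hτ1 hκ hC.exponent_pos.le (one_le_youngConst hγκε)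
    have hHX := hX.const_nonneg hτ0
    have hHΔ := hΔ.const_nonneg hτ0
    refine (hC.holderOnIcc_youngIntegral_sub hMB hX h0 hY hY' hYb hYb' hΔ hZ hZ' hκ hγκε
      hτ0).mono_const ?_
    rw [sub_zero]
    linear_combination HX * HΔ * hconst

/-- **The contraction estimate `H_{γ,τ}(Z - Z';P) ≤ K'_τ H_{κ,τ}(Y - Y';V)` in the
proof of Theorem `thm-2`.**  Let `B : V → L(U;P)` satisfy Hypothesis (C), let
`γ, κ ∈ (0,1)` with `γ + κε > 1`, `τ ∈ (0,1]`, `X ∈ C^γ([0,τ];U)` (constant `HX`),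
and let `Y, Y' ∈ C^κ([0,τ];V)` with `Y(0) = Y'(0)`, Hölder constants at most `R`
and sup norms at most `Rt`.  If `Z, Z'` are the Young integrals
`Z(t) = ∫_0^t B(Y(s)) dX(s)` and `Z'(t) = ∫_0^t B(Y'(s)) dX(s)` then
`H_{γ,τ}(Z - Z';P) ≤ K'_τ · H_{κ,τ}(Y - Y';V)` where
`K'_τ = K_{γ+κε} · HX · (3 M_C(Rt)(2R)^ε τ^κ + M_B(Rt) τ^{(1-ε)κ} + M_B(Rt) τ^κ)`
and `K_{γ+κε}` depends only on `γ + κε` (so `K'_τ → 0` as `τ → 0`). -/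
theorem contraction_estimate
    {V P U : Type*} [NormedAddCommGroup V] [NormedSpace ℝ V] [CompleteSpace V]
    [NormedAddCommGroup P] [NormedSpace ℝ P] [CompleteSpace P]
    [NormedAddCommGroup U] [NormedSpace ℝ U]
    (γ κ ε : ℝ) (hγ0 : 0 < γ) (hγ1 : γ < 1) (hκ0 : 0 < κ) (hκ1 : κ < 1)
    (hγκε : 1 < γ + κ * ε) :
    ∃ K : ℝ, ∀ (B : V → (U →L[ℝ] P)) (Cc : V → V →ₗ[ℝ] U →ₗ[ℝ] P) (MB MC : ℝ → ℝ),
      HypCplain B Cc MB MC ε →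
      ∀ (τ R Rt HX HΔ : ℝ), 0 < τ → τ ≤ 1 → 0 < R → 0 < Rt →
      ∀ (X : ℝ → U) (Y Y' : ℝ → V) (Z Z' : ℝ → P),
        (∀ s t : ℝ, 0 ≤ s → s ≤ t → t ≤ τ → ‖X t - X s‖ ≤ HX * (t - s) ^ γ) →
        Y 0 = Y' 0 →
        (∀ s t : ℝ, 0 ≤ s → s ≤ t → t ≤ τ → ‖Y t - Y s‖ ≤ R * (t - s) ^ κ) →
        (∀ s t : ℝ, 0 ≤ s → s ≤ t → t ≤ τ → ‖Y' t - Y' s‖ ≤ R * (t - s) ^ κ) →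
        (∀ s ∈ Set.Icc (0:ℝ) τ, ‖Y s‖ ≤ Rt) →
        (∀ s ∈ Set.Icc (0:ℝ) τ, ‖Y' s‖ ≤ Rt) →
        (∀ s t : ℝ, 0 ≤ s → s ≤ t → t ≤ τ →
          ‖(Y t - Y' t) - (Y s - Y' s)‖ ≤ HΔ * (t - s) ^ κ) →
        (∀ t ∈ Set.Icc (0:ℝ) τ, ∀ ε' > (0:ℝ), ∃ d > (0:ℝ), ∀ (n : ℕ) (σ : ℕ → ℝ),
          σ 0 = 0 → σ n = t → (∀ i < n, σ i ≤ σ (i + 1)) →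
          (∀ i < n, σ (i + 1) - σ i < d) →
          ‖(∑ i ∈ Finset.range n, B (Y (σ i)) (X (σ (i + 1)) - X (σ i))) - Z t‖ < ε') →
        (∀ t ∈ Set.Icc (0:ℝ) τ, ∀ ε' > (0:ℝ), ∃ d > (0:ℝ), ∀ (n : ℕ) (σ : ℕ → ℝ),
          σ 0 = 0 → σ n = t → (∀ i < n, σ i ≤ σ (i + 1)) →
          (∀ i < n, σ (i + 1) - σ i < d) →
          ‖(∑ i ∈ Finset.range n, B (Y' (σ i)) (X (σ (i + 1)) - X (σ i))) - Z' t‖ < ε') →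
        ∀ s t : ℝ, 0 ≤ s → s ≤ t → t ≤ τ →
          ‖(Z t - Z' t) - (Z s - Z' s)‖ ≤
            (K * HX * (3 * MC Rt * (2 * R) ^ ε * τ ^ κ + MB Rt * τ ^ ((1 - ε) * κ) +
              MB Rt * τ ^ κ)) * HΔ * (t - s) ^ γ := by
  obtain ⟨K, hK⟩ := contraction_estimate_general (V := V) (P := P) (U := U) hκ0.le hγκε
  exact ⟨K, fun B Cc MB MC hC τ R Rt HX HΔ hτ0 hτ1 _ _ => hK B Cc MB MC hC τ R Rt HX HΔ hτ0 hτ1⟩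
end

section
/- Let α∈(0,1) and q≥1 with αq>1, and let σ∈C_b²(ℝ) (twice continuously differentiable with σ, σ', σ'' bounded). Then there exists a constant c, depending only on α and q, such that for all continuous functions h, w, ψ: [0,1]→ℝ with finite norms ‖h‖_{α,q}, ‖w‖_{α,q}, ‖ψ‖_{α,q}: ‖σ'(h)·w·ψ‖_{α,q} ≤ c·(‖σ'‖_∞ + ‖σ''‖_∞)·(‖w‖_∞ + ‖w‖_{α,q})·(‖ψ‖_∞ + ‖ψ‖_{α,q})·(1 + ‖h‖_{α,q}), where σ'(h)·w·ψ denotes the pointwise product x ↦ σ'(h(x))w(x)ψ(x). (This is the key multiplicative estimate, obtained by splitting the Gagliardo seminorm of σ'(h)wψ into the four terms corresponding to increments of σ'(h), of w and of ψ.) -/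
open MeasureTheory

/-- The fractional Sobolev (Gagliardo) norm
`‖φ‖_{α,q} = ( ‖φ‖_{L^q(0,1)}^q + ∫∫_{[0,1]²} |φ(x)-φ(y)|^q / |x-y|^{1+αq} dx dy )^{1/q}`. -/
noncomputable def sobNorm (α q : ℝ) (φ : ℝ → ℝ) : ENNReal :=
  ((∫⁻ x in Set.Icc (0:ℝ) 1, ENNReal.ofReal (|φ x| ^ q)) +
    ∫⁻ x in Set.Icc (0:ℝ) 1, ∫⁻ y in Set.Icc (0:ℝ) 1,
      ENNReal.ofReal (|φ x - φ y| ^ q / |x - y| ^ (1 + α * q))) ^ (1 / q)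

/-!
The values and the increments of `φ` together form one function on `[0,1] ⊔ [0,1]²` whose `L^q` norm
for a suitable measure is `‖φ‖_{α,q}`. By Minkowski's inequality, a function whose values and
increments are dominated by `A |u| + B |v|` therefore has norm at most `A ‖u‖ + B ‖v‖`. With the
discrete Leibniz rule this is a product rule. With `u = 1`, which has norm `1` and no increments, it
is a chain rule for Lipschitz `g`, namely `‖g ∘ h‖ ≤ sup |g ∘ h| + Lip(g) ‖h‖`. Every term these two
rules produce occurs in the expansion of the claimed bound, so `c = 1` suffices.
-/

open scoped ENNReal NNReal

/-- The values and the increments of `φ` collected into one function, linear in `φ`. Its `L^q` norm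
for `gagliardoMeasure α q` is `sobNorm α q φ`. -/
def valueIncrement {X E : Type*} [Sub E] (φ : X → E) : X ⊕ X × X → E :=
  Sum.elim φ fun p => φ p.1 - φ p.2

theorem measurable_valueIncrement {X E : Type*} [MeasurableSpace X] [MeasurableSpace E] [Sub E]
    [MeasurableSub₂ E] {φ : X → E} (hφ : Measurable φ) : Measurable (valueIncrement φ) :=
  hφ.sumElim (by fun_prop)

/-- The measure on `ℝ ⊕ ℝ × ℝ` that underlies the Gagliardo norm: Lebesgue measure on `[0,1]` and
`|x - y| ^ (-(1 + α * q)) dx dy` on `[0,1]²`. The inverse is taken in `ℝ`, where `0⁻¹ = 0`, so that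
the density stays finite and matches the quotient in `sobNorm` on the diagonal too. -/
noncomputable def gagliardoMeasure (α q : ℝ) : Measure (ℝ ⊕ ℝ × ℝ) :=
  (volume.restrict (Set.Icc 0 1)).map Sum.inl +
    (((volume.restrict (Set.Icc 0 1)).prod (volume.restrict (Set.Icc 0 1))).withDensity
      fun p => ENNReal.ofReal (|p.1 - p.2| ^ (1 + α * q))⁻¹).map Sum.inr

theorem measurableEmbedding_inl {X Y : Type*} [MeasurableSpace X] [MeasurableSpace Y] :
    MeasurableEmbedding (Sum.inl : X → X ⊕ Y) :=
  ⟨Sum.inl_injective, measurable_inl, fun _ hs => hs.inl_image⟩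

theorem measurableEmbedding_inr {X Y : Type*} [MeasurableSpace X] [MeasurableSpace Y] :
    MeasurableEmbedding (Sum.inr : Y → X ⊕ Y) :=
  ⟨Sum.inr_injective, measurable_inr, fun _ hs => hs.inr_image⟩

theorem ae_gagliardoMeasure_of_forall_mem {α q : ℝ} {P : ℝ ⊕ ℝ × ℝ → Prop}
    (hval : ∀ x ∈ Set.Icc (0 : ℝ) 1, P (.inl x))
    (hinc : ∀ x ∈ Set.Icc (0 : ℝ) 1, ∀ y ∈ Set.Icc (0 : ℝ) 1, P (.inr (x, y))) :
    ∀ᵐ z ∂gagliardoMeasure α q, P z := by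
  rw [gagliardoMeasure, ae_add_measure_iff, measurableEmbedding_inl.ae_map_iff,
    measurableEmbedding_inr.ae_map_iff, Measure.prod_restrict]
  refine ⟨ae_restrict_of_forall_mem measurableSet_Icc hval,
    (withDensity_absolutelyContinuous _ _).ae_le ?_⟩
  exact ae_restrict_of_forall_mem (measurableSet_Icc.prod measurableSet_Icc)
    fun p hp => hinc p.1 hp.1 p.2 hp.2

theorem lintegral_gagliardoMeasure {α q : ℝ} {F : ℝ ⊕ ℝ × ℝ → ℝ≥0∞} (hF : Measurable F) :
    ∫⁻ z, F z ∂gagliardoMeasure α q =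
      (∫⁻ x in Set.Icc (0 : ℝ) 1, F (.inl x)) +
        ∫⁻ x in Set.Icc (0 : ℝ) 1, ∫⁻ y in Set.Icc (0 : ℝ) 1,
          ENNReal.ofReal (|x - y| ^ (1 + α * q))⁻¹ * F (.inr (x, y)) := by
  have hFr : Measurable fun p => F (.inr p) := hF.comp measurable_inr
  rw [gagliardoMeasure, lintegral_add_measure, lintegral_map hF measurable_inl,
    lintegral_map hF measurable_inr,
    lintegral_withDensity_eq_lintegral_mul _ (by fun_prop) hFr, lintegral_prod _ (by fun_prop)]
  rfl

theorem sobNorm_eq_eLpNorm' {α q : ℝ} (hq : 0 ≤ q) {φ : ℝ → ℝ} (hφ : Measurable φ) :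
    sobNorm α q φ = eLpNorm' (valueIncrement φ) q (gagliardoMeasure α q) := by
  rw [eLpNorm'_eq_lintegral_enorm, lintegral_gagliardoMeasure
    ((measurable_valueIncrement hφ).enorm.pow_const q), sobNorm]
  simp only [valueIncrement, Sum.elim_inl, Sum.elim_inr, Real.enorm_eq_ofReal_abs,
    ENNReal.ofReal_rpow_of_nonneg (abs_nonneg _) hq,
    ← ENNReal.ofReal_mul (inv_nonneg.2 (Real.rpow_nonneg (abs_nonneg _) _)), inv_mul_eq_div]

theorem eLpNorm'_le_add_of_ae_norm_le {X E F G : Type*} [MeasurableSpace X] {μ : Measure X}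
    [SeminormedAddGroup E] [SeminormedAddGroup F] [SeminormedAddGroup G]
    {f : X → E} {u : X → F} {v : X → G} {q A B : ℝ} (hq : 1 ≤ q)
    (hu : AEStronglyMeasurable u μ) (hv : AEStronglyMeasurable v μ)
    (hf : ∀ᵐ x ∂μ, ‖f x‖ ≤ A * ‖u x‖ + B * ‖v x‖) :
    eLpNorm' f q μ ≤ ENNReal.ofReal A * eLpNorm' u q μ + ENNReal.ofReal B * eLpNorm' v q μ := by
  have hq0 : 0 < q := one_pos.trans_le hq
  have hf' : ∀ᵐ x ∂μ, ‖f x‖ₑ ≤ ENNReal.ofReal A * ‖u x‖ₑ + ENNReal.ofReal B * ‖v x‖ₑ := by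
    filter_upwards [hf] with x hx
    simp only [← ofReal_norm, ← ENNReal.ofReal_mul' (norm_nonneg _)]
    exact (ENNReal.ofReal_le_ofReal hx).trans ENNReal.ofReal_add_le
  calc eLpNorm' f q μ
      ≤ eLpNorm' ((fun x => ENNReal.ofReal A * ‖u x‖ₑ) + fun x => ENNReal.ofReal B * ‖v x‖ₑ) q μ :=
        eLpNorm'_mono_enorm_ae hq0.le hf'
    _ ≤ eLpNorm' (fun x => ENNReal.ofReal A * ‖u x‖ₑ) q μ +
          eLpNorm' (fun x => ENNReal.ofReal B * ‖v x‖ₑ) q μ :=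
        eLpNorm'_add_le (hu.enorm.const_mul _).aestronglyMeasurable
          (hv.enorm.const_mul _).aestronglyMeasurable hq
    _ ≤ _ := add_le_add
        (eLpNorm'_le_mul_eLpNorm'_of_ae_le_mul hu (.of_forall fun _ => le_rfl) hq0)
        (eLpNorm'_le_mul_eLpNorm'_of_ae_le_mul hv (.of_forall fun _ => le_rfl) hq0)

theorem sobNorm_le_add_of_abs_le {α q A B : ℝ} {f u v : ℝ → ℝ} (hq : 1 ≤ q)
    (hf : Measurable f) (hu : Measurable u) (hv : Measurable v)
    (hval : ∀ x ∈ Set.Icc (0 : ℝ) 1, |f x| ≤ A * |u x| + B * |v x|)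
    (hinc : ∀ x ∈ Set.Icc (0 : ℝ) 1, ∀ y ∈ Set.Icc (0 : ℝ) 1,
      |f x - f y| ≤ A * |u x - u y| + B * |v x - v y|) :
    sobNorm α q f ≤ ENNReal.ofReal A * sobNorm α q u + ENNReal.ofReal B * sobNorm α q v := by
  have hq0 : 0 ≤ q := zero_le_one.trans hq
  rw [sobNorm_eq_eLpNorm' hq0 hf, sobNorm_eq_eLpNorm' hq0 hu, sobNorm_eq_eLpNorm' hq0 hv]
  exact eLpNorm'_le_add_of_ae_norm_le hq (measurable_valueIncrement hu).aestronglyMeasurable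
    (measurable_valueIncrement hv).aestronglyMeasurable
    (ae_gagliardoMeasure_of_forall_mem hval hinc)

theorem sobNorm_one (α : ℝ) {q : ℝ} (hq : 0 < q) : sobNorm α q (fun _ => 1) = 1 := by
  simp [sobNorm, hq.ne']

theorem abs_mul_sub_mul_le {R : Type*} [CommRing R] [LinearOrder R] [IsStrictOrderedRing R]
    {a a' b b' A B : R} (ha : |a| ≤ A) (hb' : |b'| ≤ B) :
    |a * b - a' * b'| ≤ A * |b - b'| + B * |a - a'| :=
  calc |a * b - a' * b'| = |a * (b - b') + b' * (a - a')| := by ring_nf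
    _ ≤ |a * (b - b')| + |b' * (a - a')| := abs_add_le _ _
    _ = |a| * |b - b'| + |b'| * |a - a'| := by rw [abs_mul, abs_mul]
    _ ≤ A * |b - b'| + B * |a - a'| := by gcongr

theorem sobNorm_mul_le {α q A B : ℝ} {f g : ℝ → ℝ} (hq : 1 ≤ q)
    (hf : Measurable f) (hg : Measurable g)
    (hfA : ∀ x ∈ Set.Icc (0 : ℝ) 1, |f x| ≤ A) (hgB : ∀ x ∈ Set.Icc (0 : ℝ) 1, |g x| ≤ B) :
    sobNorm α q (fun x => f x * g x) ≤
      ENNReal.ofReal A * sobNorm α q g + ENNReal.ofReal B * sobNorm α q f := by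
  refine sobNorm_le_add_of_abs_le hq (hf.mul hg) hg hf (fun x hx => ?_)
    fun x hx y hy => abs_mul_sub_mul_le (hfA x hx) (hgB y hy)
  have hB : 0 ≤ B := (abs_nonneg _).trans (hgB x hx)
  calc |f x * g x| = |f x| * |g x| := abs_mul _ _
    _ ≤ A * |g x| := by gcongr; exact hfA x hx
    _ ≤ A * |g x| + B * |f x| := le_add_of_nonneg_right (by positivity)

theorem sobNorm_mul_mul_le {α q A B C : ℝ} {f g k : ℝ → ℝ} (hq : 1 ≤ q)
    (hf : Measurable f) (hg : Measurable g) (hk : Measurable k)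
    (hfA : ∀ x ∈ Set.Icc (0 : ℝ) 1, |f x| ≤ A) (hgB : ∀ x ∈ Set.Icc (0 : ℝ) 1, |g x| ≤ B)
    (hkC : ∀ x ∈ Set.Icc (0 : ℝ) 1, |k x| ≤ C) :
    sobNorm α q (fun x => f x * g x * k x) ≤
      ENNReal.ofReal A * ENNReal.ofReal B * sobNorm α q k +
        ENNReal.ofReal C *
          (ENNReal.ofReal A * sobNorm α q g + ENNReal.ofReal B * sobNorm α q f) := by
  have hA : 0 ≤ A := (abs_nonneg _).trans (hfA 0 (by simp))
  have hfgAB : ∀ x ∈ Set.Icc (0 : ℝ) 1, |f x * g x| ≤ A * B := fun x hx => by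
    rw [abs_mul]
    gcongr
    exacts [hfA x hx, hgB x hx]
  rw [← ENNReal.ofReal_mul hA]
  calc sobNorm α q (fun x => f x * g x * k x)
      ≤ ENNReal.ofReal (A * B) * sobNorm α q k +
          ENNReal.ofReal C * sobNorm α q (fun x => f x * g x) :=
        sobNorm_mul_le hq (hf.mul hg) hk hfgAB hkC
    _ ≤ _ := by
        gcongr
        exact sobNorm_mul_le hq hf hg hfA hgB

theorem sobNorm_comp_le {α q M : ℝ} {K : ℝ≥0} {g h : ℝ → ℝ} (hq : 1 ≤ q)
    (hg : LipschitzWith K g) (hh : Measurable h) (hM : ∀ x ∈ Set.Icc (0 : ℝ) 1, |g (h x)| ≤ M) :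
    sobNorm α q (fun x => g (h x)) ≤ ENNReal.ofReal M + K * sobNorm α q h := by
  have hdom : sobNorm α q (fun x => g (h x)) ≤
      ENNReal.ofReal M * sobNorm α q (fun _ => 1) + ENNReal.ofReal K * sobNorm α q h := by
    refine sobNorm_le_add_of_abs_le hq (hg.continuous.measurable.comp hh) measurable_const hh
      (fun x hx => ?_) fun x _ y _ => ?_
    · rw [abs_one, mul_one]
      exact (hM x hx).trans (le_add_of_nonneg_right (by positivity))
    · simpa [Real.dist_eq] using hg.dist_le_mul (h x) (h y)
  rwa [sobNorm_one α (one_pos.trans_le hq), mul_one, ENNReal.ofReal_coe_nnreal] at hdom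

theorem sobolev_multiplicative_estimate_general (α : ℝ) {q M Mw Mψ : ℝ} {K : ℝ≥0}
    {g h w ψ : ℝ → ℝ} (hq : 1 ≤ q) (hgM : ∀ x ∈ Set.Icc (0 : ℝ) 1, |g (h x)| ≤ M)
    (hgK : LipschitzWith K g) (hh : Measurable h) (hw : Measurable w) (hψ : Measurable ψ)
    (hMw : ∀ x ∈ Set.Icc (0 : ℝ) 1, |w x| ≤ Mw) (hMψ : ∀ x ∈ Set.Icc (0 : ℝ) 1, |ψ x| ≤ Mψ) :
    sobNorm α q (fun x => g (h x) * w x * ψ x) ≤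
      (ENNReal.ofReal M + K) * (ENNReal.ofReal Mw + sobNorm α q w) *
        (ENNReal.ofReal Mψ + sobNorm α q ψ) * (1 + sobNorm α q h) := by
  have hgh : Measurable fun x => g (h x) := hgK.continuous.measurable.comp hh
  set H := sobNorm α q h
  set W := sobNorm α q w
  set Ψ := sobNorm α q ψ
  set m := ENNReal.ofReal M
  set mw := ENNReal.ofReal Mw
  set mψ := ENNReal.ofReal Mψ
  calc sobNorm α q (fun x => g (h x) * w x * ψ x)
      ≤ m * mw * Ψ + mψ * (m * W + mw * sobNorm α q (fun x => g (h x))) :=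
        sobNorm_mul_mul_le hq hgh hw hψ hgM hMw hMψ
    _ ≤ (m + K * H) * mw * Ψ + mψ * ((m + K * H) * W + mw * (m + K * H)) := by
        gcongr
        exacts [le_self_add, le_self_add, sobNorm_comp_le hq hgK hh hgM]
    _ ≤ (m + K * H) * mw * Ψ + mψ * ((m + K * H) * W + mw * (m + K * H)) +
          (m + K * H) * W * Ψ := le_self_add
    _ = (m + K * H) * (mw + W) * (mψ + Ψ) := by ring
    _ ≤ (m + K * H) * (mw + W) * (mψ + Ψ) + (m * H + K) * (mw + W) * (mψ + Ψ) := le_self_add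
    _ = (m + K) * (mw + W) * (mψ + Ψ) * (1 + H) := by ring

/-- **The key multiplicative estimate (Step 2 in the proof of Theorem `nonheat`).**
Let `α ∈ (0,1)`, `q ≥ 1` with `αq > 1` and `σ ∈ C_b²(ℝ)`.  There is a constant
`c`, depending only on `α` and `q`, such that for all continuous `h, w, ψ`
on `[0,1]` with finite `‖·‖_{α,q}`-norms (`Ms1, Ms2` bounding `|σ'|, |σ''|`, and
`Mw, Mψ` bounding `|w|, |ψ|` on `[0,1]`):
`‖σ'(h)·w·ψ‖_{α,q} ≤ c·(‖σ'‖_∞+‖σ''‖_∞)·(‖w‖_∞+‖w‖_{α,q})·(‖ψ‖_∞+‖ψ‖_{α,q})·(1+‖h‖_{α,q})`. -/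
theorem sobolev_multiplicative_estimate
    (α q : ℝ) (hα0 : 0 < α) (hα1 : α < 1) (hq : 1 ≤ q) (hαq : 1 < α * q) :
    ∃ c : ℝ, 0 < c ∧
      ∀ (σ h w ψ : ℝ → ℝ) (Ms0 Ms1 Ms2 Mw Mψ : ℝ),
        ContDiff ℝ 2 σ →
        (∀ x, |σ x| ≤ Ms0) → (∀ x, |deriv σ x| ≤ Ms1) →
        (∀ x, |deriv (deriv σ) x| ≤ Ms2) →
        Continuous h → Continuous w → Continuous ψ →
        (∀ x ∈ Set.Icc (0:ℝ) 1, |w x| ≤ Mw) →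
        (∀ x ∈ Set.Icc (0:ℝ) 1, |ψ x| ≤ Mψ) →
        sobNorm α q h ≠ ⊤ → sobNorm α q w ≠ ⊤ → sobNorm α q ψ ≠ ⊤ →
        sobNorm α q (fun x => deriv σ (h x) * w x * ψ x) ≤
          ENNReal.ofReal (c * (Ms1 + Ms2)) *
            (ENNReal.ofReal Mw + sobNorm α q w) *
            (ENNReal.ofReal Mψ + sobNorm α q ψ) *
            (1 + sobNorm α q h) := by
  refine ⟨1, one_pos, fun σ h w ψ _ Ms1 Ms2 Mw Mψ hσ _ hσ' hσ'' hh hw hψ hMw hMψ _ _ _ => ?_⟩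
  have hlip : LipschitzWith Ms2.toNNReal (deriv σ) :=
    lipschitzWith_of_nnnorm_deriv_le hσ.differentiable_deriv_two
      fun x => NNReal.le_toNNReal_of_coe_le (hσ'' x)
  rw [one_mul, ENNReal.ofReal_add ((abs_nonneg _).trans (hσ' 0)) ((abs_nonneg _).trans (hσ'' 0))]
  exact sobolev_multiplicative_estimate_general α hq (fun x _ => hσ' (h x)) hlip
    hh.measurable hw.measurable hψ.measurable hMw hMψ
end
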